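/- The bilateral weighted shift V with weights (v_n) is a bounded invertible operator on H with bounded inverse, its spectral radii satisfy r(V*) = r(V) = r(V⁻¹) = r((V⁻¹)*) = c, and moreover S(V,c) = S(V⁻¹,c) = S((V*)⁻¹,c) = S(V*,c) = {0}. -/

import Mathlib

noncomputable section

/-- `Hsp` is the complex Hilbert space `ℓ²(ℤ)` of square-summable bilateral
complex sequences. -/
abbrev Hsp : Type := lp (fun _ : ℤ => ℂ) 2

/-- `e n` is the standard orthonormal basis vector `b_n` (indicator sequence of `n`). -/
noncomputable def e (n : ℤ) : Hsp := lp.single 2 n 1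

/-- `S T a` is the set of vectors `x` such that `‖T^N x‖ ≤ M·a^N` for all `N ≥ 0`,
for some constant `M ≥ 0`. -/
def S {X : Type*} [NormedAddCommGroup X] [NormedSpace ℂ X] (T : X →L[ℂ] X) (a : ℝ) : Set X :=
  {x | ∃ M : ℝ, 0 ≤ M ∧ ∀ N : ℕ, ‖(T ^ N) x‖ ≤ M * a ^ N}

/-- `φ(x) = x·sin((π/2)·log₂(1+log₂(1+x)))`. -/
noncomputable def phi (x : ℝ) : ℝ :=
  x * Real.sin (Real.pi / 2 * Real.logb 2 (1 + Real.logb 2 (1 + x)))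

/-- `ψ(x) = √x·sin((π/2)·log₂(1+log₂(1+x)))`. -/
noncomputable def psi (x : ℝ) : ℝ :=
  Real.sqrt x * Real.sin (Real.pi / 2 * Real.logb 2 (1 + Real.logb 2 (1 + x)))

/-- `v_n = c^{φ(|n|)}·e^{ψ(|n|)}`. -/
noncomputable def vw (c : ℝ) (n : ℤ) : ℝ :=
  c ^ phi |(n : ℝ)| * Real.exp (psi |(n : ℝ)|)

/-!
With `g = log v`, the power `V ^ N` is the shift by `N` weighted by `exp (g n - g (n - N))`, and
passing to the adjoint replaces `g` by `-g` and the step by its opposite.  The factor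
`sin (π / 2 * log₂ (1 + log₂ (1 + x)))` varies so slowly that, as a function of `|n|`, `g` has
derivative at most `L + o(1)` in absolute value, where `L = log c`.  Hence `‖V ^ N‖` grows at most
like `exp ((L + ε) * N)`, which bounds the spectral radius by `c`.  On the other hand the sine
takes both values `1` and `-1` at arbitrarily large integers, where `g` and `-g` respectively equal
`L * |n| + √|n|`.  The unbounded term `√|n|` prevents the orbit of any nonzero vector from being
`O(c ^ N)`, and by Gelfand's formula this also bounds the spectral radius from below.
-/

open Filter Set Topology
open scoped lp

section SpectralRadius

lemma spectralRadius_star {𝕜 A : Type*} [NormedField 𝕜] [StarRing 𝕜] [NormedStarGroup 𝕜] [Ring A]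
    [StarRing A] [Algebra 𝕜 A] [StarModule 𝕜 A] (T : A) :
    spectralRadius 𝕜 (star T) = spectralRadius 𝕜 T :=
  star_involutive.toPerm.iSup_congr fun z => by
    rw [star_involutive.coe_toPerm, nnnorm_star, spectrum.map_star, Set.mem_star]

lemma spectralRadius_le_ofReal_of_norm_pow_le {A : Type*} [NormedRing A] [NormedAlgebra ℂ A]
    [CompleteSpace A] {T : A} {K a : ℝ} (ha : 0 ≤ a) (h : ∀ N : ℕ, ‖T ^ N‖ ≤ K * a ^ N) :
    spectralRadius ℂ T ≤ ENNReal.ofReal a := by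
  have hK : 0 < max K 1 := lt_max_of_lt_right one_pos
  have hroot : Tendsto (fun N : ℕ => max K 1 ^ (1 / N : ℝ) * a) atTop (𝓝 a) := by
    simpa using ((tendsto_const_nhds (x := max K 1)).rpow tendsto_one_div_atTop_nhds_zero_nat
      (Or.inl hK.ne')).mul_const a
  refine le_of_tendsto_of_tendsto (spectrum.pow_norm_pow_one_div_tendsto_nhds_spectralRadius T)
    (ENNReal.tendsto_ofReal hroot) ?_
  filter_upwards [eventually_ne_atTop 0] with N hN
  gcongr
  calc ‖T ^ N‖ ^ (1 / N : ℝ)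
      ≤ (max K 1 * a ^ N) ^ (1 / N : ℝ) := by
        gcongr
        exact (h N).trans (by gcongr; exact le_max_left _ _)
    _ = max K 1 ^ (1 / N : ℝ) * a := by
        rw [Real.mul_rpow hK.le (by positivity), one_div, Real.pow_rpow_inv_natCast ha hN]

lemma S_eq_univ_of_spectralRadius_lt {X : Type*} [NormedAddCommGroup X] [NormedSpace ℂ X]
    [CompleteSpace X] {T : X →L[ℂ] X} {a : ℝ} (h : spectralRadius ℂ T < ENNReal.ofReal a) :
    S T a = univ := by
  have ha : 0 < a := ENNReal.ofReal_pos.1 (pos_of_gt h)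
  have hle : ∀ᶠ N : ℕ in atTop, ‖T ^ N‖ / a ^ N ≤ 1 := by
    have hlim := spectrum.pow_norm_pow_one_div_tendsto_nhds_spectralRadius T
    filter_upwards [hlim.eventually_lt_const h, eventually_ne_atTop 0] with N hN hN0
    rw [ENNReal.ofReal_lt_ofReal_iff ha, one_div] at hN
    rw [div_le_one (by positivity), ← Real.rpow_inv_natCast_pow (norm_nonneg (T ^ N)) hN0]
    gcongr
  obtain ⟨K, hK⟩ := (isBoundedUnder_of_eventually_le hle).bddAbove_range
  have hpow : ∀ N, ‖T ^ N‖ ≤ K * a ^ N := fun N =>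
    (div_le_iff₀ (by positivity)).1 (hK (mem_range_self N))
  have hK0 : 0 ≤ K := by simpa using (norm_nonneg _).trans (hpow 0)
  refine eq_univ_of_forall fun x => ⟨K * ‖x‖, by positivity, fun N => ?_⟩
  calc ‖(T ^ N) x‖ ≤ ‖T ^ N‖ * ‖x‖ := (T ^ N).le_opNorm x
    _ ≤ K * a ^ N * ‖x‖ := by gcongr; exact hpow N
    _ = K * ‖x‖ * a ^ N := by ring

end SpectralRadius

section WeightedShift

variable {G : Type*} [AddCommGroup G] {g : G → ℝ}

/-- A real function on an additive group has bounded increments if each of its differences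
`n ↦ g n - g (n - d)` is bounded. For `g` the logarithm of a weight this says that all the
weighted shifts, in both directions, are bounded operators. -/
def HasBoundedIncrements (g : G → ℝ) : Prop :=
  ∀ d, ∃ C, ∀ n, |g n - g (n - d)| ≤ C

lemma HasBoundedIncrements.neg (hg : HasBoundedIncrements g) : HasBoundedIncrements (-g) := by
  simpa only [HasBoundedIncrements, Pi.neg_apply, neg_sub_neg, abs_sub_comm] using hg

variable {𝕜 : Type*} [RCLike 𝕜] {d : G} {C : ℝ}

lemma hasSum_norm_sq_sub (f : ℓ²(G, 𝕜)) (d : G) :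
    HasSum (fun n => ‖f (n - d)‖ ^ 2) (‖f‖ ^ 2) := by
  have h := lp.hasSum_norm (p := 2) (by norm_num) f
  simpa [Function.comp_def] using (Equiv.subRight d).hasSum_iff.2 h

lemma norm_sq_exp_smul_le (hC : ∀ n, g n - g (n - d) ≤ C) (f : ℓ²(G, 𝕜)) (n : G) :
    ‖Real.exp (g n - g (n - d)) • f (n - d)‖ ^ 2 ≤ Real.exp C ^ 2 * ‖f (n - d)‖ ^ 2 := by
  rw [norm_smul, Real.norm_of_nonneg (Real.exp_pos _).le, mul_pow]
  gcongr
  exact hC n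

lemma memℓp_exp_smul (hC : ∀ n, g n - g (n - d) ≤ C) (f : ℓ²(G, 𝕜)) :
    Memℓp (fun n => Real.exp (g n - g (n - d)) • f (n - d)) 2 := by
  refine memℓp_gen ?_
  simpa using Summable.of_nonneg_of_le (fun _ => sq_nonneg _) (norm_sq_exp_smul_le hC f)
    ((hasSum_norm_sq_sub f d).summable.mul_left _)

lemma HasBoundedIncrements.exists_sub_le (hg : HasBoundedIncrements g) (d : G) :
    ∃ C, ∀ n, g n - g (n - d) ≤ C :=
  (hg d).imp fun _ hC n => (le_abs_self _).trans (hC n)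

variable (𝕜) in
/-- The weighted shift by `d` with weight `exp ∘ g`, as a linear map: `b_n` is sent to
`exp (g (n + d) - g n) • b_{n + d}`. -/
def weightedShiftₗ (hg : HasBoundedIncrements g) (d : G) : ℓ²(G, 𝕜) →ₗ[𝕜] ℓ²(G, 𝕜) where
  toFun f := ⟨fun n => Real.exp (g n - g (n - d)) • f (n - d),
    memℓp_exp_smul (hg.exists_sub_le d).choose_spec f⟩
  map_add' f₁ f₂ := lp.ext <| funext fun n => smul_add _ (f₁ (n - d)) (f₂ (n - d))
  map_smul' a f := lp.ext <| funext fun n => smul_comm _ a (f (n - d))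

lemma weightedShiftₗ_apply (hg : HasBoundedIncrements g) (d : G) (f : ℓ²(G, 𝕜)) (n : G) :
    weightedShiftₗ 𝕜 hg d f n = Real.exp (g n - g (n - d)) • f (n - d) := rfl

lemma norm_weightedShiftₗ_le (hg : HasBoundedIncrements g) (hC : ∀ n, g n - g (n - d) ≤ C)
    (f : ℓ²(G, 𝕜)) : ‖weightedShiftₗ 𝕜 hg d f‖ ≤ Real.exp C * ‖f‖ := by
  refine lp.norm_le_of_tsum_le (by norm_num) (by positivity) ?_
  have hsum := (hasSum_norm_sq_sub f d).mul_left (Real.exp C ^ 2)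
  have hle := (hsum.summable.of_nonneg_of_le (fun _ => sq_nonneg _)
    (norm_sq_exp_smul_le hC f)).tsum_le_tsum (norm_sq_exp_smul_le hC f) hsum.summable
  simpa [mul_pow, hsum.tsum_eq, weightedShiftₗ_apply] using hle

variable (𝕜) in
/-- The weighted shift by `d` with weight `exp ∘ g`, as a bounded operator on `ℓ²(G, 𝕜)`. -/
def weightedShift (hg : HasBoundedIncrements g) (d : G) : ℓ²(G, 𝕜) →L[𝕜] ℓ²(G, 𝕜) :=
  (weightedShiftₗ 𝕜 hg d).mkContinuous (Real.exp (hg.exists_sub_le d).choose)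
    (norm_weightedShiftₗ_le hg (hg.exists_sub_le d).choose_spec)

lemma weightedShift_apply (hg : HasBoundedIncrements g) (d : G) (f : ℓ²(G, 𝕜)) (n : G) :
    weightedShift 𝕜 hg d f n = Real.exp (g n - g (n - d)) • f (n - d) :=
  weightedShiftₗ_apply hg d f n

lemma norm_weightedShift_le (hg : HasBoundedIncrements g) (hC : ∀ n, g n - g (n - d) ≤ C) :
    ‖weightedShift 𝕜 hg d‖ ≤ Real.exp C :=
  ContinuousLinearMap.opNorm_le_bound _ (Real.exp_pos _).le (norm_weightedShiftₗ_le hg hC)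

lemma weightedShift_single [DecidableEq G] (hg : HasBoundedIncrements g) (d n : G) (a : 𝕜) :
    weightedShift 𝕜 hg d (lp.single 2 n a) =
      (Real.exp (g (n + d) - g n) : 𝕜) • lp.single 2 (n + d) a := by
  ext m
  rw [weightedShift_apply, lp.coeFn_smul, Pi.smul_apply, lp.single_apply, lp.single_apply,
    RCLike.real_smul_eq_coe_mul, smul_eq_mul]
  obtain rfl | hm := eq_or_ne m (n + d)
  · simp
  · simp [hm, sub_eq_iff_eq_add]

lemma weightedShift_zero (hg : HasBoundedIncrements g) : weightedShift 𝕜 hg 0 = 1 := by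
  ext f n
  simp [weightedShift_apply]

lemma weightedShift_add (hg : HasBoundedIncrements g) (a b : G) :
    weightedShift 𝕜 hg (a + b) = weightedShift 𝕜 hg a * weightedShift 𝕜 hg b := by
  ext f n
  simp only [mul_apply_eq_comp, weightedShift_apply, smul_smul, ← Real.exp_add,
    sub_add_sub_cancel, sub_sub]

lemma weightedShift_nsmul (hg : HasBoundedIncrements g) (d : G) (N : ℕ) :
    weightedShift 𝕜 hg (N • d) = weightedShift 𝕜 hg d ^ N := by
  induction N with
  | zero => rw [zero_nsmul, pow_zero, weightedShift_zero]
  | succ N ih => rw [succ_nsmul, pow_succ, weightedShift_add, ih]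

lemma adjoint_weightedShift (hg : HasBoundedIncrements g) (d : G) :
    ContinuousLinearMap.adjoint (weightedShift 𝕜 hg d) = weightedShift 𝕜 hg.neg (-d) := by
  refine ((ContinuousLinearMap.eq_adjoint_iff _ _).2 fun x y => ?_).symm
  rw [lp.inner_eq_tsum, lp.inner_eq_tsum, ← (Equiv.subRight d).tsum_eq]
  refine tsum_congr fun n => ?_
  simp only [Equiv.subRight_apply, weightedShift_apply, Pi.neg_apply, sub_neg_eq_add,
    sub_add_cancel, neg_add_eq_sub, RCLike.real_smul_eq_coe_smul (K := 𝕜), inner_smul_left,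
    inner_smul_right, RCLike.conj_ofReal]

/-- Each coordinate of an orbit grows like `exp (g (N • d))`, up to a factor independent of `N`,
because a translate of `g` differs from `g` by a bounded function. -/
lemma S_weightedShift (hg : HasBoundedIncrements g) {ℓ : ℝ}
    (hgd : ¬BddAbove (range fun N : ℕ => g (N • d) - N * ℓ)) :
    S (weightedShift ℂ hg d) (Real.exp ℓ) = {0} := by
  refine Subset.antisymm ?_ (singleton_subset_iff.2 ⟨0, le_rfl, fun N => by simp⟩)
  rintro x ⟨M, -, hM⟩
  by_contra hx
  obtain ⟨n, hn⟩ : ∃ n, x n ≠ 0 := Function.ne_iff.1 fun h => hx (lp.ext h)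
  obtain ⟨C, hC⟩ := hg (-n)
  refine hgd ⟨M / ‖x n‖ + C + g n, forall_mem_range.2 fun N => ?_⟩
  have hcoord : Real.exp (g (n + N • d) - g n) * ‖x n‖ ≤ M * Real.exp (N * ℓ) := by
    have h := (lp.norm_apply_le_norm two_ne_zero _ (n + N • d)).trans (hM N)
    rwa [← weightedShift_nsmul, weightedShift_apply, add_sub_cancel_right, norm_smul,
      Real.norm_of_nonneg (Real.exp_pos _).le, ← Real.exp_nat_mul] at h
  have hexp : Real.exp (g (n + N • d) - g n - N * ℓ) ≤ M / ‖x n‖ := by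
    rwa [Real.exp_sub _ (N * ℓ), div_le_div_iff₀ (Real.exp_pos _) (norm_pos_iff.2 hn)]
  have htranslate : g (N • d) ≤ g (n + N • d) + C := by
    have h := (le_abs_self _).trans (hC (N • d))
    rw [sub_neg_eq_add, add_comm _ n] at h
    linarith
  linarith [Real.add_one_le_exp (g (n + N • d) - g n - N * ℓ)]

lemma ofReal_exp_le_spectralRadius_weightedShift (hg : HasBoundedIncrements g) {ℓ : ℝ}
    (hgd : ¬BddAbove (range fun N : ℕ => g (N • d) - N * ℓ)) :
    ENNReal.ofReal (Real.exp ℓ) ≤ spectralRadius ℂ (weightedShift ℂ hg d) := by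
  classical
  by_contra! hlt
  have huniv : ({0} : Set ℓ²(G, ℂ)) = univ :=
    (S_weightedShift hg hgd).symm.trans (S_eq_univ_of_spectralRadius_lt hlt)
  have hzero : (lp.single 2 0 1 : ℓ²(G, ℂ)) = 0 := eq_univ_iff_forall.1 huniv _
  simpa [lp.norm_single] using congrArg norm hzero

end WeightedShift

section CoarselyLipschitz

/-- A map between pseudometric spaces is coarsely `L`-Lipschitz if, for each `K > L`, it is
`K`-Lipschitz up to a bounded error. For the logarithm of a weight on `ℤ` this bounds the
exponential growth rate of the powers of the weighted shift. -/
def CoarselyLipschitz {α β : Type*} [PseudoMetricSpace α] [PseudoMetricSpace β] (L : ℝ)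
    (f : α → β) : Prop :=
  ∀ K > L, ∃ C, ∀ x y, dist (f x) (f y) ≤ K * dist x y + C

variable {G : Type*} [SeminormedAddCommGroup G] {L : ℝ} {g : G → ℝ}

lemma CoarselyLipschitz.hasBoundedIncrements (hg : CoarselyLipschitz L g) :
    HasBoundedIncrements g := by
  obtain ⟨C, hC⟩ := hg (L + 1) (lt_add_one L)
  exact fun d => ⟨(L + 1) * ‖d‖ + C, fun n => by
    simpa [Real.dist_eq, dist_eq_norm] using hC n (n - d)⟩

lemma CoarselyLipschitz.spectralRadius_weightedShift_le (hL : 0 ≤ L) (hg : CoarselyLipschitz L g)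
    (d : G) : spectralRadius ℂ (weightedShift ℂ hg.hasBoundedIncrements d) ≤
      ENNReal.ofReal (Real.exp (L * ‖d‖)) := by
  have hcont : Continuous fun K : ℝ => ENNReal.ofReal (Real.exp (K * ‖d‖)) :=
    ENNReal.continuous_ofReal.comp (by fun_prop)
  refine ge_of_tendsto ((hcont.tendsto L).mono_left (nhdsWithin_le_nhds (s := Ioi L)))
    (eventually_mem_nhdsWithin.mono fun K hK => ?_)
  obtain ⟨C, hC⟩ := hg K hK
  refine spectralRadius_le_ofReal_of_norm_pow_le (K := Real.exp C) (Real.exp_pos _).le fun N => ?_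
  rw [← weightedShift_nsmul, ← Real.exp_nat_mul, ← Real.exp_add]
  refine norm_weightedShift_le _ fun n => ?_
  calc g n - g (n - N • d) ≤ dist (g n) (g (n - N • d)) := le_abs_self _
    _ ≤ K * ‖N • d‖ + C := by simpa [dist_eq_norm] using hC n (n - N • d)
    _ ≤ K * (N * ‖d‖) + C := by
      have hK0 : 0 ≤ K := hL.trans (le_of_lt hK)
      gcongr
      exact norm_nsmul_le
    _ = C + N * (K * ‖d‖) := by ring

lemma CoarselyLipschitz.spectralRadius_weightedShift (hL : 0 ≤ L) (hg : CoarselyLipschitz L g)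
    {d : G} (hd : ‖d‖ ≤ 1) (hgd : ¬BddAbove (range fun N : ℕ => g (N • d) - N * L)) :
    spectralRadius ℂ (weightedShift ℂ hg.hasBoundedIncrements d) =
      ENNReal.ofReal (Real.exp L) := by
  refine le_antisymm ((hg.spectralRadius_weightedShift_le hL d).trans ?_)
    (ofReal_exp_le_spectralRadius_weightedShift _ hgd)
  gcongr
  exact mul_le_of_le_one_right hL hd

lemma exists_dist_le_of_eventually_norm_deriv_le {E : Type*} [NormedAddCommGroup E]
    [NormedSpace ℝ E] {f f' : ℝ → E} {a K : ℝ} (hf : ContinuousOn f (Ici a))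
    (hf' : ∀ᶠ x in atTop, HasDerivAt f (f' x) x) (hK : ∀ᶠ x in atTop, ‖f' x‖ ≤ K) :
    ∃ C, ∀ x ∈ Ici a, ∀ y ∈ Ici a, dist (f x) (f y) ≤ K * dist x y + C := by
  obtain ⟨X, hX⟩ := eventually_atTop.1 ((hf'.and hK).and (eventually_ge_atTop a))
  have haX : a ≤ X := (hX X le_rfl).2
  obtain ⟨B, hB⟩ := isCompact_Icc.exists_bound_of_continuousOn
    (hf.mono (Icc_subset_Ici_self : Icc a X ⊆ Ici a))
  have hfar : ∀ x y, dist (f (max x X)) (f (max y X)) ≤ K * dist x y := by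
    intro x y
    have hmean := (convex_Ici X).norm_image_sub_le_of_norm_hasDerivWithin_le
      (fun z hz => (hX z hz).1.1.hasDerivWithinAt) (fun z hz => (hX z hz).1.2)
      (le_max_right y X) (le_max_right x X)
    have hK0 : 0 ≤ K := (norm_nonneg _).trans (hX X le_rfl).1.2
    rw [dist_eq_norm, Real.dist_eq]
    refine hmean.trans (mul_le_mul_of_nonneg_left ?_ hK0)
    exact abs_max_sub_max_le_abs x y X
  have hnear : ∀ x ∈ Ici a, dist (f x) (f (max x X)) ≤ 2 * B := by
    intro x hx
    have hBX := hB X ⟨haX, le_rfl⟩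
    rcases le_total x X with h | h
    · rw [max_eq_right h]
      linarith [dist_le_norm_add_norm (f x) (f X), hB x ⟨hx, h⟩]
    · rw [max_eq_left h, dist_self]
      linarith [norm_nonneg (f X)]
  refine ⟨4 * B, fun x hx y hy => ?_⟩
  have hy' := hnear y hy
  rw [dist_comm] at hy'
  linarith [dist_triangle4 (f x) (f (max x X)) (f (max y X)) (f y), hnear x hx, hfar x y]

lemma coarselyLipschitz_comp_norm {E : Type*} [NormedAddCommGroup E] [NormedSpace ℝ E]
    {f f' : ℝ → E} (hL : 0 ≤ L) (hf : ContinuousOn f (Ici 0))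
    (hf' : ∀ᶠ x in atTop, HasDerivAt f (f' x) x) (hK : ∀ K > L, ∀ᶠ x in atTop, ‖f' x‖ ≤ K) :
    CoarselyLipschitz L fun n : G => f ‖n‖ := by
  intro K hLK
  obtain ⟨C, hC⟩ := exists_dist_le_of_eventually_norm_deriv_le hf hf' (hK K hLK)
  refine ⟨C, fun m n => (hC _ (norm_nonneg m) _ (norm_nonneg n)).trans ?_⟩
  have hK0 : 0 ≤ K := hL.trans hLK.le
  gcongr
  exact (dist_norm_norm_le m n).trans_eq (dist_eq_norm m n).symm

end CoarselyLipschitz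

section LogWeight

/-- The slowly oscillating factor common to `phi` and `psi`. -/
def osc (x : ℝ) : ℝ :=
  Real.sin (Real.pi / 2 * Real.logb 2 (1 + Real.logb 2 (1 + x)))

lemma one_le_one_add_logb {x : ℝ} (hx : 0 ≤ x) : 1 ≤ 1 + Real.logb 2 (1 + x) :=
  le_add_of_nonneg_right (Real.logb_nonneg one_lt_two (le_add_of_nonneg_right hx))

lemma hasDerivAt_osc {x : ℝ} (hx : 0 ≤ x) :
    HasDerivAt osc (Real.cos (Real.pi / 2 * Real.logb 2 (1 + Real.logb 2 (1 + x))) *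
      (Real.pi / 2 * (1 / (1 + x) / Real.log 2 / (1 + Real.logb 2 (1 + x)) / Real.log 2))) x := by
  have hA := one_le_one_add_logb hx
  have hinner : HasDerivAt (fun x => Real.logb 2 (1 + x)) (1 / (1 + x) / Real.log 2) x :=
    (((hasDerivAt_id' x).const_add 1).log (by positivity)).div_const _
  exact ((((hinner.const_add 1).log (by positivity)).div_const _).const_mul _).sin

lemma tendsto_mul_deriv_osc : Tendsto (fun x => x * deriv osc x) atTop (𝓝 0) := by
  have hbound : Tendsto (fun x => Real.pi / 2 / Real.log 2 ^ 2 / (1 + Real.logb 2 (1 + x)))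
      atTop (𝓝 0) :=
    (tendsto_atTop_add_const_left _ _ ((Real.tendsto_logb_atTop one_lt_two).comp
      (tendsto_atTop_add_const_left _ _ tendsto_id))).const_div_atTop _
  refine squeeze_zero_norm' ?_ hbound
  filter_upwards [eventually_ge_atTop 0] with x hx
  have hA := one_le_one_add_logb hx
  rw [(hasDerivAt_osc hx).deriv, mul_left_comm, norm_mul, Real.norm_eq_abs, Real.norm_eq_abs]
  refine (mul_le_of_le_one_left (abs_nonneg _) (Real.abs_cos_le_one _)).trans ?_
  rw [abs_of_nonneg (by positivity)]
  calc x * (Real.pi / 2 * (1 / (1 + x) / Real.log 2 / (1 + Real.logb 2 (1 + x)) / Real.log 2))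
      = x / (1 + x) * (Real.pi / 2 / Real.log 2 ^ 2 / (1 + Real.logb 2 (1 + x))) := by field_simp
    _ ≤ Real.pi / 2 / Real.log 2 ^ 2 / (1 + Real.logb 2 (1 + x)) :=
      mul_le_of_le_one_left (by positivity) (div_le_one_of_le₀ (by linarith) (by positivity))

/-- The logarithm of the weight `vw c`, with `L = log c`, as a function of the absolute value of
the index. -/
def logProfile (L x : ℝ) : ℝ := (L * x + √x) * osc x

lemma continuousOn_logProfile (L : ℝ) : ContinuousOn (logProfile L) (Ici 0) := by
  have hosc : ContinuousOn osc (Ici 0) := fun x hx =>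
    (hasDerivAt_osc hx).continuousAt.continuousWithinAt
  exact ContinuousOn.mul (by fun_prop) hosc

lemma hasDerivAt_logProfile (L : ℝ) {x : ℝ} (hx : 0 < x) :
    HasDerivAt (logProfile L)
      ((L + 1 / (2 * √x)) * osc x + (L * x + √x) * deriv osc x) x := by
  have hlin : HasDerivAt (fun x => L * x) L x := by simpa using (hasDerivAt_id' x).const_mul L
  exact (hlin.add (Real.hasDerivAt_sqrt hx.ne')).mul
    (hasDerivAt_osc hx.le).differentiableAt.hasDerivAt

lemma norm_deriv_logProfile_le {L : ℝ} (hL : 0 ≤ L) (x : ℝ) :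
    ‖(L + 1 / (2 * √x)) * osc x + (L * x + √x) * deriv osc x‖ ≤
      (L + 1 / (2 * √x)) + (L + 1 / √x) * ‖x * deriv osc x‖ := by
  have hsplit : (L * x + √x) * deriv osc x = (L + 1 / √x) * (x * deriv osc x) := by
    rw [← mul_assoc, add_mul L (1 / √x) x, one_div_mul_eq_div, Real.div_sqrt]
  have hosc : ‖osc x‖ ≤ 1 := Real.abs_sin_le_one _
  rw [hsplit]
  refine (norm_add_le _ _).trans ?_
  rw [norm_mul, norm_mul, Real.norm_of_nonneg (by positivity : 0 ≤ L + 1 / (2 * √x)),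
    Real.norm_of_nonneg (by positivity : 0 ≤ L + 1 / √x)]
  gcongr
  exact mul_le_of_le_one_right (by positivity) hosc

/-- The logarithm of the weight `vw c`, with `L = log c`, for indices in any normed group. -/
def logWeight {G : Type*} [Norm G] (L : ℝ) (n : G) : ℝ := logProfile L ‖n‖

lemma vw_eq_exp_logWeight {c : ℝ} (hc : 0 < c) (n : ℤ) :
    vw c n = Real.exp (logWeight (Real.log c) n) := by
  rw [vw, phi, psi, Real.rpow_def_of_pos hc, ← Real.exp_add, logWeight, logProfile, osc,
    Int.norm_eq_abs]
  ring_nf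

lemma coarselyLipschitz_logWeight {G : Type*} [SeminormedAddCommGroup G] {L : ℝ} (hL : 0 ≤ L) :
    CoarselyLipschitz L (logWeight L : G → ℝ) := by
  refine coarselyLipschitz_comp_norm hL (continuousOn_logProfile L)
    ((eventually_gt_atTop 0).mono fun x hx => hasDerivAt_logProfile L hx) fun K hK => ?_
  have hinv : Tendsto (fun x => 1 / √x) atTop (𝓝 0) :=
    Real.tendsto_sqrt_atTop.const_div_atTop 1
  have hinv' : Tendsto (fun x => 1 / (2 * √x)) atTop (𝓝 0) :=
    (Real.tendsto_sqrt_atTop.const_mul_atTop two_pos).const_div_atTop 1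
  have hlim : Tendsto (fun x => (L + 1 / (2 * √x)) + (L + 1 / √x) * ‖x * deriv osc x‖)
      atTop (𝓝 L) := by
    simpa using (hinv'.const_add L).add ((hinv.const_add L).mul tendsto_mul_deriv_osc.norm)
  filter_upwards [hlim.eventually_lt_const hK] with x hx
  exact (norm_deriv_logProfile_le hL x).trans hx.le

/-- The points at which the argument of the sine in `osc` equals `π / 2 * j`. -/
def peak (j : ℕ) : ℕ := 2 ^ (2 ^ j - 1) - 1

lemma le_peak (j : ℕ) : j ≤ peak j :=
  Nat.le_sub_one_of_lt <| (Nat.le_sub_one_of_lt Nat.lt_two_pow_self).trans_lt Nat.lt_two_pow_self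

lemma osc_peak (j : ℕ) : osc (peak j) = Real.sin (Real.pi / 2 * j) := by
  have hlog : ∀ k : ℕ, Real.logb 2 (1 + ((2 ^ k - 1 : ℕ) : ℝ)) = k := fun k => by
    rw [Nat.cast_sub Nat.one_le_two_pow]
    simp [Real.logb_pow]
  rw [osc, peak, hlog, hlog]

lemma osc_peak_four_mul_add (k j : ℕ) :
    osc (peak (4 * k + j)) = Real.sin (Real.pi / 2 * j) := by
  rw [osc_peak, ← Real.sin_add_nat_mul_two_pi (Real.pi / 2 * j) k]
  push_cast
  ring_nf

lemma frequently_osc_eq_one : ∃ᶠ m : ℕ in atTop, osc m = 1 :=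
  frequently_atTop.2 fun k => ⟨peak (4 * k + 1), by linarith [le_peak (4 * k + 1)], by
    simp [osc_peak_four_mul_add]⟩

lemma frequently_osc_eq_neg_one : ∃ᶠ m : ℕ in atTop, osc m = -1 :=
  frequently_atTop.2 fun k => ⟨peak (4 * k + 3), by linarith [le_peak (4 * k + 3)], by
    rw [osc_peak_four_mul_add, ← Real.sin_pi_div_two, ← Real.sin_neg,
      ← Real.sin_add_two_pi (-(Real.pi / 2))]
    push_cast
    ring_nf⟩

lemma not_bddAbove_range_of_frequently_le {ι α : Type*} [Preorder α] [NoMaxOrder α]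
    {l : Filter ι} {u v : ι → α} (hu : Tendsto u l atTop) (h : ∃ᶠ i in l, u i ≤ v i) :
    ¬BddAbove (range v) := by
  rintro ⟨B, hB⟩
  obtain ⟨i, hle, hlt⟩ := (h.and_eventually (hu.eventually_gt_atTop B)).exists
  exact (hlt.trans_le hle).not_ge (hB (mem_range_self i))

lemma logWeight_nsmul (L : ℝ) {d : ℤ} (hd : ‖d‖ = 1) (N : ℕ) :
    logWeight L (N • d) = logProfile L N := by
  rw [logWeight, nsmul_eq_mul, norm_mul, hd, mul_one, Int.norm_natCast]

lemma not_bddAbove_logWeight_nsmul (L : ℝ) {d : ℤ} (hd : ‖d‖ = 1) :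
    ¬BddAbove (range fun N : ℕ => logWeight L (N • d) - N * L) := by
  refine not_bddAbove_range_of_frequently_le
    (Real.tendsto_sqrt_atTop.comp tendsto_natCast_atTop_atTop)
    (frequently_osc_eq_one.mono fun N hN => le_of_eq ?_)
  rw [logWeight_nsmul L hd, logProfile, hN, Function.comp_apply]
  ring

lemma not_bddAbove_neg_logWeight_nsmul (L : ℝ) {d : ℤ} (hd : ‖d‖ = 1) :
    ¬BddAbove (range fun N : ℕ => (-logWeight L) (N • d) - N * L) := by
  refine not_bddAbove_range_of_frequently_le
    (Real.tendsto_sqrt_atTop.comp tendsto_natCast_atTop_atTop)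
    (frequently_osc_eq_neg_one.mono fun N hN => le_of_eq ?_)
  rw [Pi.neg_apply, logWeight_nsmul L hd, logProfile, hN, Function.comp_apply]
  ring

end LogWeight

section ShiftByWeightVw

variable {c : ℝ} {d : ℤ}

lemma hasBoundedIncrements_logWeight_log (hc : 1 ≤ c) :
    HasBoundedIncrements (logWeight (Real.log c) : ℤ → ℝ) :=
  (coarselyLipschitz_logWeight (Real.log_nonneg hc)).hasBoundedIncrements

lemma weightedShift_logWeight_e (hc : 1 ≤ c) (d n : ℤ) :
    weightedShift ℂ (hasBoundedIncrements_logWeight_log hc) d (e n) =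
      ((vw c (n + d) / vw c n : ℝ) : ℂ) • e (n + d) := by
  have hc0 : 0 < c := one_pos.trans_le hc
  rw [vw_eq_exp_logWeight hc0, vw_eq_exp_logWeight hc0, ← Real.exp_sub]
  exact weightedShift_single _ d n 1

lemma spectralRadius_weightedShift_logWeight (hc : 1 ≤ c) (hd : ‖d‖ = 1) :
    spectralRadius ℂ (weightedShift ℂ (hasBoundedIncrements_logWeight_log hc) d) =
      ENNReal.ofReal c := by
  have hL : 0 ≤ Real.log c := Real.log_nonneg hc
  rw [(coarselyLipschitz_logWeight hL).spectralRadius_weightedShift hL hd.le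
    (not_bddAbove_logWeight_nsmul _ hd), Real.exp_log (one_pos.trans_le hc)]

lemma S_weightedShift_logWeight (hc : 1 ≤ c) (hd : ‖d‖ = 1) :
    S (weightedShift ℂ (hasBoundedIncrements_logWeight_log hc) d) c = {0} := by
  simpa only [Real.exp_log (one_pos.trans_le hc)] using
    S_weightedShift (hasBoundedIncrements_logWeight_log hc) (not_bddAbove_logWeight_nsmul _ hd)

lemma S_adjoint_weightedShift_logWeight (hc : 1 ≤ c) (hd : ‖d‖ = 1) :
    S (ContinuousLinearMap.adjoint
      (weightedShift ℂ (hasBoundedIncrements_logWeight_log hc) d)) c = {0} := by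
  have hd' : ‖-d‖ = 1 := by rwa [norm_neg]
  simpa only [adjoint_weightedShift, Real.exp_log (one_pos.trans_le hc)] using
    S_weightedShift (hasBoundedIncrements_logWeight_log hc).neg
      (not_bddAbove_neg_logWeight_nsmul _ hd')

end ShiftByWeightVw

/-- The bilateral weighted shift `V` with weights `v_n = c^{φ(|n|)}·e^{ψ(|n|)}` is a
bounded invertible operator on `ℓ²(ℤ)` with bounded inverse,
`r(V*) = r(V) = r(V⁻¹) = r((V⁻¹)*) = c`, and
`S(V,c) = S(V⁻¹,c) = S((V*)⁻¹,c) = S(V*,c) = {0}`. -/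
theorem stmt11 (c : ℝ) (hc : 1 ≤ c) :
    ∃ V Vinv : Hsp →L[ℂ] Hsp,
      (∀ n : ℤ, V (e n) = ((vw c (n + 1) / vw c n : ℝ) : ℂ) • e (n + 1)) ∧
      (∀ n : ℤ, Vinv (e n) = ((vw c (n - 1) / vw c n : ℝ) : ℂ) • e (n - 1)) ∧
      V ∘L Vinv = 1 ∧ Vinv ∘L V = 1 ∧
      spectralRadius ℂ (ContinuousLinearMap.adjoint V) = spectralRadius ℂ V ∧
      spectralRadius ℂ V = spectralRadius ℂ Vinv ∧
      spectralRadius ℂ Vinv = spectralRadius ℂ (ContinuousLinearMap.adjoint Vinv) ∧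
      spectralRadius ℂ V = ENNReal.ofReal c ∧
      S V c = {0} ∧ S Vinv c = {0} ∧
      S (ContinuousLinearMap.adjoint Vinv) c = {0} ∧
      S (ContinuousLinearMap.adjoint V) c = {0} := by
  have hg := hasBoundedIncrements_logWeight_log hc
  have hone : ‖(1 : ℤ)‖ = 1 := norm_one
  have hneg : ‖(-1 : ℤ)‖ = 1 := by rw [norm_neg, hone]
  have hV := spectralRadius_weightedShift_logWeight hc hone
  have hVinv := spectralRadius_weightedShift_logWeight hc hneg
  refine ⟨weightedShift ℂ hg 1, weightedShift ℂ hg (-1), weightedShift_logWeight_e hc 1,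
    weightedShift_logWeight_e hc (-1), ?_, ?_, spectralRadius_star _, hV.trans hVinv.symm,
    (spectralRadius_star _).symm, hV, S_weightedShift_logWeight hc hone,
    S_weightedShift_logWeight hc hneg, S_adjoint_weightedShift_logWeight hc hneg,
    S_adjoint_weightedShift_logWeight hc hone⟩
  · rw [← ContinuousLinearMap.mul_def, ← weightedShift_add, add_neg_cancel, weightedShift_zero]
  · rw [← ContinuousLinearMap.mul_def, ← weightedShift_add, neg_add_cancel, weightedShift_zero]
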